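/- There exists a constant C > 0 such that for every h > 0 and every x ∈ [0,1], ∫₀^∞ ∫₀¹ (G_{r+h}(x,z) − G_r(x,z))² dz dr ≤ C h^{1/2}. -/

import Mathlib

open Real MeasureTheory Set

/-!
Write `λₙ = π²(n+1)²`. For `r > 0` the function `z ↦ G (r+h) x z - G r x z` is a sine series with
absolutely summable coefficients `cₙ = 2 e^{-λₙ r} (e^{-λₙ h} - 1) sin((n+1)πx)`, so Parseval
(`integral_sq_sine_series`) identifies the inner integral with `∑ cₙ² / 2`. Integrating in `r` term
by term gives `∑ (1 - e^{-λₙ h})² sin²((n+1)πx) / λₙ`.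

Since `(1 - e^{-u})² ≤ min 1 u`, each term is at most `2h / (1 + λₙ h)`. With `s = π √h` this is
`2h / (1 + s²(n+1)²)`, and it is dominated by the increment of `(2h/s) arctan (s ·)` over
`[n, n+1]`. The sum telescopes to at most `(2h/s)(π/2) = √h`, so `C = 1` works.
-/

/-- The Dirichlet heat kernel on `[0,1]`:
`G t x y = ∑_{n=1}^∞ 2 e^{−π²n²t} sin(nπx) sin(nπy)` for `t > 0`, and `0` for `t ≤ 0`. -/
noncomputable def G (t x y : ℝ) : ℝ :=
  if 0 < t then
    ∑' n : ℕ, 2 * Real.exp (-(Real.pi ^ 2) * ((n : ℝ) + 1) ^ 2 * t)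
      * Real.sin (((n : ℝ) + 1) * Real.pi * x) * Real.sin (((n : ℝ) + 1) * Real.pi * y)
  else 0

lemma integral_cos_int_mul_pi (k : ℤ) :
    ∫ z in (0 : ℝ)..1, cos (k * π * z) = if k = 0 then 1 else 0 := by
  split_ifs with hk
  · simp [hk]
  · have hk' : (k : ℝ) * π ≠ 0 := mul_ne_zero (by exact_mod_cast hk) pi_ne_zero
    rw [intervalIntegral.integral_comp_mul_left (fun z => cos z) hk']
    simp [integral_cos, sin_int_mul_pi]

lemma integral_sin_mul_sin (n m : ℕ) :
    ∫ z in (0 : ℝ)..1, sin (((n : ℝ) + 1) * π * z) * sin (((m : ℝ) + 1) * π * z)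
      = if n = m then 1 / 2 else 0 := by
  have key : ∀ z : ℝ, sin (((n : ℝ) + 1) * π * z) * sin (((m : ℝ) + 1) * π * z)
      = (cos ((((n : ℤ) - m : ℤ) : ℝ) * π * z)
          - cos ((((n : ℤ) + m + 2 : ℤ) : ℝ) * π * z)) / 2 := by
    intro z
    have h1 : (((n : ℤ) - m : ℤ) : ℝ) * π * z
        = ((n : ℝ) + 1) * π * z - ((m : ℝ) + 1) * π * z := by push_cast; ring
    have h2 : (((n : ℤ) + m + 2 : ℤ) : ℝ) * π * z
        = ((n : ℝ) + 1) * π * z + ((m : ℝ) + 1) * π * z := by push_cast; ring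
    rw [h1, h2, cos_sub, cos_add]
    ring
  simp_rw [key]
  rw [intervalIntegral.integral_div, intervalIntegral.integral_sub
    (Continuous.intervalIntegrable (by fun_prop) _ _)
    (Continuous.intervalIntegrable (by fun_prop) _ _),
    integral_cos_int_mul_pi, integral_cos_int_mul_pi]
  have h2 : ¬ ((n : ℤ) + m + 2 = 0) := by omega
  rw [if_neg h2]
  by_cases h : n = m
  · simp [h]
  · have : ¬ ((n : ℤ) - m = 0) := by omega
    simp [h, this]

/-- Term-by-term integration of an absolutely summable sine series against a bounded continuous
weight. -/
lemma hasSum_integral_sine_series (c : ℕ → ℝ) (hc : Summable fun n => |c n|)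
    (g : ℝ → ℝ) (hg : Continuous g) (M : ℝ) (hM : ∀ z, |g z| ≤ M) :
    HasSum (fun n : ℕ => ∫ z in (0 : ℝ)..1, c n * sin (((n : ℝ) + 1) * π * z) * g z)
      (∫ z in (0 : ℝ)..1, (∑' n : ℕ, c n * sin (((n : ℝ) + 1) * π * z)) * g z) := by
  have hs : ∀ (n : ℕ) (z : ℝ), |c n * sin (((n : ℝ) + 1) * π * z)| ≤ |c n| := by
    intro n z
    rw [abs_mul]
    exact mul_le_of_le_one_right (abs_nonneg _) (abs_sin_le_one _)
  refine intervalIntegral.hasSum_integral_of_dominated_convergence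
    (fun n _ => |c n| * M) ?_ ?_ ?_ ?_ ?_
  · intro n
    exact Continuous.aestronglyMeasurable (by fun_prop)
  · intro n
    refine Filter.Eventually.of_forall fun z _ => ?_
    rw [norm_eq_abs, abs_mul]
    exact mul_le_mul (hs n z) (hM z) (abs_nonneg _) (abs_nonneg _)
  · exact Filter.Eventually.of_forall fun z _ => hc.mul_right M
  · simp
  · refine Filter.Eventually.of_forall fun z _ => ?_
    have hz : Summable fun n : ℕ => c n * sin (((n : ℝ) + 1) * π * z) :=
      Summable.of_norm_bounded hc fun n => hs n z
    exact hz.hasSum.mul_right (g z)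

/-- Parseval's identity for absolutely summable sine series on `[0,1]`. -/
lemma integral_sq_sine_series (c : ℕ → ℝ) (hc : Summable fun n => |c n|) :
    ∫ z in (0 : ℝ)..1, (∑' n : ℕ, c n * sin (((n : ℝ) + 1) * π * z)) ^ 2
      = ∑' n : ℕ, c n ^ 2 / 2 := by
  have hs : ∀ (n : ℕ) (z : ℝ), ‖c n * sin (((n : ℝ) + 1) * π * z)‖ ≤ |c n| := by
    intro n z
    rw [norm_eq_abs, abs_mul]
    exact mul_le_of_le_one_right (abs_nonneg _) (abs_sin_le_one _)
  set g : ℝ → ℝ := fun z => ∑' n : ℕ, c n * sin (((n : ℝ) + 1) * π * z) with hg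
  have hgc : Continuous g := continuous_tsum (fun n => by fun_prop) hc hs
  have hgM : ∀ z, |g z| ≤ ∑' n, |c n| := fun z =>
    tsum_of_norm_bounded hc.hasSum fun n => hs n z
  have h1 := hasSum_integral_sine_series c hc g hgc _ hgM
  have h2 : ∀ m : ℕ, ∫ z in (0 : ℝ)..1, c m * sin (((m : ℝ) + 1) * π * z) * g z
      = c m ^ 2 / 2 := by
    intro m
    have h3 := hasSum_integral_sine_series c hc (fun z => c m * sin (((m : ℝ) + 1) * π * z))
      (by fun_prop) |c m| (fun z => hs m z)
    have h4 : ∀ n : ℕ, ∫ z in (0 : ℝ)..1, c n * sin (((n : ℝ) + 1) * π * z)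
        * (c m * sin (((m : ℝ) + 1) * π * z)) = if n = m then c m ^ 2 / 2 else 0 := by
      intro n
      have : ∀ z : ℝ, c n * sin (((n : ℝ) + 1) * π * z) * (c m * sin (((m : ℝ) + 1) * π * z))
          = c n * c m * (sin (((n : ℝ) + 1) * π * z) * sin (((m : ℝ) + 1) * π * z)) :=
        fun z => by ring
      simp_rw [this]
      rw [intervalIntegral.integral_const_mul, integral_sin_mul_sin]
      split_ifs with h
      · subst h; ring
      · simp
    simp_rw [h4] at h3
    have h5 := h3.unique (hasSum_ite_eq m (c m ^ 2 / 2))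
    rw [← h5]
    exact intervalIntegral.integral_congr fun z _ => mul_comm _ _
  simp_rw [h2] at h1
  rw [h1.tsum_eq]
  exact intervalIntegral.integral_congr fun z _ => by simp only [hg, sq]

lemma summable_exp_heat (t : ℝ) (ht : 0 < t) :
    Summable fun n : ℕ => exp (-(π ^ 2) * ((n : ℝ) + 1) ^ 2 * t) := by
  have hq : exp (-(π ^ 2 * t)) < 1 := by
    rw [exp_lt_one_iff]
    have := pi_pos
    have : 0 < π ^ 2 * t := by positivity
    linarith
  refine Summable.of_nonneg_of_le (fun n => (exp_pos _).le) (fun n => ?_)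
    (summable_geometric_of_lt_one (exp_pos _).le hq)
  rw [← exp_nat_mul, exp_le_exp]
  have h1 : (n : ℝ) ≤ ((n : ℝ) + 1) ^ 2 := by nlinarith [(Nat.cast_nonneg n : (0 : ℝ) ≤ n)]
  have h2 : 0 ≤ π ^ 2 * t := by positivity
  nlinarith [mul_le_mul_of_nonneg_right h1 h2]

lemma inner_integral_eq (h x r : ℝ) (hh : 0 < h) (hr : 0 < r) :
    ∫ z in Set.Icc (0 : ℝ) 1, (G (r + h) x z - G r x z) ^ 2
      = ∑' n : ℕ, 2 * (1 - exp (-(π ^ 2 * ((n : ℝ) + 1) ^ 2 * h))) ^ 2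
          * sin (((n : ℝ) + 1) * π * x) ^ 2 * exp (-(2 * (π ^ 2 * ((n : ℝ) + 1) ^ 2)) * r) := by
  set a : ℝ → ℕ → ℝ := fun t n => 2 * exp (-(π ^ 2) * ((n : ℝ) + 1) ^ 2 * t)
      * sin (((n : ℝ) + 1) * π * x) with ha
  have habs : ∀ t, 0 < t → Summable fun n => |a t n| := by
    intro t ht
    refine Summable.of_nonneg_of_le (fun n => abs_nonneg _) (fun n => ?_)
      ((summable_exp_heat t ht).mul_left 2)
    simp only [ha]
    rw [abs_mul, abs_of_pos (by positivity : 0 < 2 * exp (-(π ^ 2) * ((n : ℝ) + 1) ^ 2 * t))]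
    exact mul_le_of_le_one_right (by positivity) (abs_sin_le_one _)
  have hsum : ∀ t, 0 < t → ∀ z, Summable fun n : ℕ => a t n * sin (((n : ℝ) + 1) * π * z) := by
    intro t ht z
    refine Summable.of_norm_bounded (habs t ht) fun n => ?_
    rw [norm_eq_abs, abs_mul]
    exact mul_le_of_le_one_right (abs_nonneg _) (abs_sin_le_one _)
  have hrh : 0 < r + h := by linarith
  have hG : ∀ z, G (r + h) x z - G r x z
      = ∑' n : ℕ, (a (r + h) n - a r n) * sin (((n : ℝ) + 1) * π * z) := by
    intro z
    simp only [G, if_pos hr, if_pos hrh]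
    rw [← (hsum _ hrh z).tsum_sub (hsum _ hr z)]
    exact tsum_congr fun n => by ring
  simp_rw [hG]
  rw [integral_Icc_eq_integral_Ioc, ← intervalIntegral.integral_of_le zero_le_one,
    integral_sq_sine_series]
  · refine tsum_congr fun n => ?_
    simp only [ha]
    have e1 : exp (-(π ^ 2) * ((n : ℝ) + 1) ^ 2 * (r + h))
        = exp (-(π ^ 2) * ((n : ℝ) + 1) ^ 2 * r) * exp (-(π ^ 2 * ((n : ℝ) + 1) ^ 2 * h)) := by
      rw [← exp_add]; ring_nf
    have e2 : exp (-(2 * (π ^ 2 * ((n : ℝ) + 1) ^ 2)) * r)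
        = exp (-(π ^ 2) * ((n : ℝ) + 1) ^ 2 * r) ^ 2 := by
      rw [← exp_nat_mul]; push_cast; ring_nf
    rw [e1, e2]
    ring
  · exact Summable.of_nonneg_of_le (fun n => abs_nonneg _) (fun n => abs_sub _ _)
      ((habs _ hrh).add (habs _ hr))

/-- The elementary bound `(1 - e^{-lh})² / l ≤ 2h / (1 + lh)`, from `(1 - e^{-u})² ≤ min 1 u`. -/
lemma one_sub_exp_sq_div_le (l h : ℝ) (hl : 0 < l) (hh : 0 < h) :
    (1 - exp (-(l * h))) ^ 2 / l ≤ 2 * h / (1 + l * h) := by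
  have hu : 0 < l * h := by positivity
  have h1 : 1 - exp (-(l * h)) ≤ l * h := by linarith [add_one_le_exp (-(l * h))]
  have h2 : 1 - exp (-(l * h)) ≤ 1 := by linarith [exp_pos (-(l * h))]
  have h3 : 0 ≤ 1 - exp (-(l * h)) := by
    have : exp (-(l * h)) ≤ 1 := exp_le_one_iff.2 (by linarith)
    linarith
  rw [div_le_div_iff₀ hl (by positivity)]
  generalize 1 - exp (-(l * h)) = v at *
  have h4 : v ^ 2 ≤ 1 := by nlinarith
  have h5 : v ^ 2 ≤ l * h := by nlinarith
  nlinarith [mul_le_mul_of_nonneg_right h4 hu.le]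

lemma div_le_arctan_sub (s : ℝ) (hs : 0 < s) (n : ℕ) :
    s / (1 + s ^ 2 * ((n : ℝ) + 1) ^ 2) ≤ arctan (s * ((n + 1 : ℕ) : ℝ)) - arctan (s * n) := by
  have hlt : s * (n : ℝ) < s * ((n + 1 : ℕ) : ℝ) := by push_cast; nlinarith
  obtain ⟨y, hy, hd⟩ := exists_hasDerivAt_eq_slope arctan (fun y => 1 / (1 + y ^ 2)) hlt
    continuous_arctan.continuousOn (fun y _ => hasDerivAt_arctan y)
  have hdiff : s * ((n + 1 : ℕ) : ℝ) - s * n = s := by push_cast; ring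
  rw [hdiff, eq_div_iff hs.ne'] at hd
  rw [← hd, one_div_mul_eq_div]
  have hy0 : 0 ≤ y := le_trans (by positivity) hy.1.le
  have hy2 : y ^ 2 ≤ s ^ 2 * ((n : ℝ) + 1) ^ 2 := by
    rw [← mul_pow]
    have := hy.2.le
    push_cast at this
    gcongr
  gcongr

lemma sum_range_le_sqrt (h : ℝ) (hh : 0 < h) (N : ℕ) :
    ∑ n ∈ Finset.range N, 2 * h / (1 + π ^ 2 * ((n : ℝ) + 1) ^ 2 * h) ≤ √h := by
  have hq : 0 < √h := sqrt_pos.2 hh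
  have hqq : √h ^ 2 = h := sq_sqrt hh.le
  have hs : 0 < π * √h := mul_pos pi_pos hq
  have hterm : ∀ n : ℕ, 2 * h / (1 + π ^ 2 * ((n : ℝ) + 1) ^ 2 * h)
      ≤ 2 * √h / π * (arctan (π * √h * ((n + 1 : ℕ) : ℝ)) - arctan (π * √h * n)) := by
    intro n
    have e : 2 * h / (1 + π ^ 2 * ((n : ℝ) + 1) ^ 2 * h)
        = 2 * √h / π * (π * √h / (1 + (π * √h) ^ 2 * ((n : ℝ) + 1) ^ 2)) := by
      have e1 : 1 + (π * √h) ^ 2 * ((n : ℝ) + 1) ^ 2 = 1 + π ^ 2 * ((n : ℝ) + 1) ^ 2 * h := by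
        rw [mul_pow, hqq]; ring
      have e2 : 2 * √h / π * (π * √h) = 2 * h := by
        field_simp
        exact hqq
      rw [e1, ← mul_div_assoc, e2]
    rw [e]
    exact mul_le_mul_of_nonneg_left (div_le_arctan_sub _ hs n) (by positivity)
  refine (Finset.sum_le_sum fun n _ => hterm n).trans ?_
  rw [← Finset.mul_sum, Finset.sum_range_sub (fun n : ℕ => arctan (π * √h * n))]
  have h1 : arctan (π * √h * N) - arctan (π * √h * (0 : ℕ)) ≤ π / 2 := by
    simpa using (arctan_lt_pi_div_two _).le
  refine (mul_le_mul_of_nonneg_left h1 (by positivity)).trans (le_of_eq ?_)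
  field_simp

/-- There is `C > 0` such that for all `h > 0` and `x ∈ [0,1]`,
`∫₀^∞ ∫₀¹ (G_{r+h}(x,z) − G_r(x,z))² dz dr ≤ C h^{1/2}`. -/
theorem kernel_L2_time_modulus :
    ∃ C : ℝ, 0 < C ∧ ∀ h x : ℝ, 0 < h → x ∈ Set.Icc (0 : ℝ) 1 →
      (∫ r in Set.Ioi (0 : ℝ), ∫ z in Set.Icc (0 : ℝ) 1, (G (r + h) x z - G r x z) ^ 2)
        ≤ C * h ^ ((1 : ℝ) / 2) := by
  refine ⟨1, one_pos, fun h x hh _ => ?_⟩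
  rw [one_mul, ← sqrt_eq_rpow]
  rw [setIntegral_congr_fun measurableSet_Ioi
    (fun r (hr : 0 < r) => inner_integral_eq h x r hh hr)]
  set k : ℕ → ℝ := fun n => 2 * (1 - exp (-(π ^ 2 * ((n : ℝ) + 1) ^ 2 * h))) ^ 2
          * sin (((n : ℝ) + 1) * π * x) ^ 2 with hk
  have hk0 : ∀ n, 0 ≤ k n := fun n => by positivity
  have hl : ∀ n : ℕ, 0 < π ^ 2 * ((n : ℝ) + 1) ^ 2 := fun n => by positivity
  have hint : ∀ n : ℕ, IntegrableOn
      (fun r => k n * exp (-(2 * (π ^ 2 * ((n : ℝ) + 1) ^ 2)) * r)) (Ioi 0) := fun n =>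
    (integrableOn_exp_mul_Ioi (by linarith [hl n]) 0).const_mul _
  have hval : ∀ n : ℕ, ∫ r in Ioi (0 : ℝ), k n * exp (-(2 * (π ^ 2 * ((n : ℝ) + 1) ^ 2)) * r)
      = k n / (2 * (π ^ 2 * ((n : ℝ) + 1) ^ 2)) := by
    intro n
    rw [integral_const_mul, integral_exp_mul_Ioi (by linarith [hl n])]
    simp [div_eq_mul_inv]
  have hle : ∀ n : ℕ, k n / (2 * (π ^ 2 * ((n : ℝ) + 1) ^ 2))
      ≤ 2 * h / (1 + π ^ 2 * ((n : ℝ) + 1) ^ 2 * h) := by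
    intro n
    refine le_trans ?_ (one_sub_exp_sq_div_le _ h (hl n) hh)
    rw [div_le_div_iff₀ (by linarith [hl n]) (hl n)]
    have hsin : sin (((n : ℝ) + 1) * π * x) ^ 2 ≤ 1 := sin_sq_le_one _
    have := mul_le_mul_of_nonneg_left hsin
      (by positivity : 0 ≤ 2 * (1 - exp (-(π ^ 2 * ((n : ℝ) + 1) ^ 2 * h))) ^ 2
        * (π ^ 2 * ((n : ℝ) + 1) ^ 2))
    simp only [hk]
    linarith
  have hnn : ∀ n : ℕ, 0 ≤ k n / (2 * (π ^ 2 * ((n : ℝ) + 1) ^ 2)) := fun n =>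
    div_nonneg (hk0 n) (by linarith [hl n])
  have hpart : ∀ N, ∑ n ∈ Finset.range N, k n / (2 * (π ^ 2 * ((n : ℝ) + 1) ^ 2)) ≤ √h := fun N =>
    (Finset.sum_le_sum fun n _ => hle n).trans (sum_range_le_sqrt h hh N)
  have hnorm : ∀ n : ℕ,
      ∫ r in Ioi (0 : ℝ), ‖k n * exp (-(2 * (π ^ 2 * ((n : ℝ) + 1) ^ 2)) * r)‖
        = k n / (2 * (π ^ 2 * ((n : ℝ) + 1) ^ 2)) := by
    intro n
    rw [← hval n]
    congr 1
    ext r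
    exact norm_of_nonneg (mul_nonneg (hk0 n) (exp_pos _).le)
  have hswap := integral_tsum_of_summable_integral_norm hint (by
    simp_rw [hnorm]
    exact summable_of_sum_range_le hnn hpart)
  rw [← hswap]
  simp_rw [hval]
  exact Real.tsum_le_of_sum_range_le hnn hpart
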